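/- arXiv:2601.15258 — 2 statements merged into one kernel-verified Lean document; each statement's English description precedes it below -/
import Mathlib

section
/- In the max-variant, for every k ≥ 3 facilities, the mechanism M_k^max has approximation ratio at most 2(k+1): on every instance with m ≥ k groups, its output has social cost at most 2(k+1) times the minimum social cost over all feasible solutions. -/
open Finset

noncomputable section

/-- A distributed facility location setting for `k` facilities and `m` groups:
`n ≥ 2` agents on the real line, partitioned into `m ≥ k` disjoint nonempty groups. -/
structure FLSetting (k m : ℕ) where
  n : ℕ
  hn : 2 ≤ n
  hmk : k ≤ m
  grp : Fin n → Fin m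
  surj : Function.Surjective grp

/-- A two-phase mechanism for `k` facilities: for each number `m` of groups, a
representative function on finite multisets of reals, and a selection function
producing the `k` facility locations from the multiset of representatives. -/
structure TwoPhase (k : ℕ) where
  rep : ℕ → Multiset ℝ → ℝ
  sel : ℕ → Multiset ℝ → Fin k → ℝ

/-- Validity of a two-phase mechanism: the representative of a nonempty multiset
is one of its elements, and the selected facility locations form a sub-multiset
of the representatives. -/
def TwoPhase.Valid {k : ℕ} (M : TwoPhase k) : Prop :=
  (∀ (m : ℕ) (S : Multiset ℝ), S ≠ 0 → M.rep m S ∈ S) ∧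
  (∀ (m : ℕ) (R : Multiset ℝ), Multiset.card R = m → k ≤ m →
    (↑(List.ofFn (M.sel m R)) : Multiset ℝ) ≤ R)

/-- The multiset of (reported) positions of the agents in group `j`. -/
def groupMS {k m : ℕ} (S : FLSetting k m) (x : Fin S.n → ℝ) (j : Fin m) : Multiset ℝ :=
  (Finset.univ.filter (fun i => S.grp i = j)).val.map x

/-- The number of agents in group `j`. -/
def groupSize {k m : ℕ} (S : FLSetting k m) (j : Fin m) : ℕ :=
  (Finset.univ.filter (fun i => S.grp i = j)).card

/-- The multiset of the `m` group representatives. -/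
def repsMS {k m : ℕ} (M : TwoPhase k) (S : FLSetting k m) (x : Fin S.n → ℝ) : Multiset ℝ :=
  (Finset.univ.val.map fun j : Fin m => M.rep m (groupMS S x j))

/-- The facility locations output by mechanism `M` on reported positions `x`. -/
def outcome {k m : ℕ} (M : TwoPhase k) (S : FLSetting k m) (x : Fin S.n → ℝ) : Fin k → ℝ :=
  M.sel m (repsMS M S x)

/-- Sum-variant individual cost: total distance to all facilities. -/
def sumCost (k : ℕ) (xi : ℝ) (y : Fin k → ℝ) : ℝ := ∑ ℓ, |xi - y ℓ|

/-- Max-variant individual cost: distance to the farthest facility. -/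
def maxCost (k : ℕ) (xi : ℝ) (y : Fin k → ℝ) : ℝ := ⨆ ℓ, |xi - y ℓ|

/-- Social cost: average over groups of the average individual cost within the group. -/
def SC {k m : ℕ} (cost : ℝ → (Fin k → ℝ) → ℝ) (S : FLSetting k m) (x : Fin S.n → ℝ)
    (y : Fin k → ℝ) : ℝ :=
  (1 / (m : ℝ)) * ∑ j : Fin m,
    (1 / (groupSize S j : ℝ)) *
      ∑ i ∈ Finset.univ.filter (fun i => S.grp i = j), cost (x i) y

/-- A feasible solution opens the `k` facilities at the positions of `k` distinct agents. -/
def Feasible {k m : ℕ} (S : FLSetting k m) (x : Fin S.n → ℝ) (y : Fin k → ℝ) : Prop :=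
  ∃ f : Fin k → Fin S.n, Function.Injective f ∧ ∀ ℓ, y ℓ = x (f ℓ)

/-- Strategyproofness with respect to an individual cost function. -/
def Strategyproof {k : ℕ} (cost : ℝ → (Fin k → ℝ) → ℝ) (M : TwoPhase k) : Prop :=
  ∀ (m : ℕ) (S : FLSetting k m) (x : Fin S.n → ℝ) (i : Fin S.n) (x' : ℝ),
    cost (x i) (outcome M S x) ≤ cost (x i) (outcome M S (Function.update x i x'))

/-- Strategyproofness restricted to instances with exactly `m` groups. -/
def StrategyproofOn {k : ℕ} (cost : ℝ → (Fin k → ℝ) → ℝ) (M : TwoPhase k) (m : ℕ) : Prop :=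
  ∀ (S : FLSetting k m) (x : Fin S.n → ℝ) (i : Fin S.n) (x' : ℝ),
    cost (x i) (outcome M S x) ≤ cost (x i) (outcome M S (Function.update x i x'))

/-- The `t`-th leftmost element of a multiset of reals (1-indexed). -/
def kthLeftmost (S : Multiset ℝ) (t : ℕ) : ℝ := (S.sort (· ≤ ·)).getD (t - 1) 0

/-- The mechanism `M_m(θ, ℓ, r)` for two facilities: each group's representative is the
position of its `⌈θ·n_g⌉`-th leftmost agent, and the facilities are opened at the
`⌈ℓm⌉`-th and `⌈rm⌉`-th leftmost representative locations. -/
def Mmech (θ l r : ℝ) : TwoPhase 2 where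
  rep := fun _ S => kthLeftmost S ⌈θ * (Multiset.card S : ℝ)⌉₊
  sel := fun m R => ![kthLeftmost R ⌈l * (m : ℝ)⌉₊, kthLeftmost R ⌈r * (m : ℝ)⌉₊]


/-- The mechanism `M_k^max`: each group's representative is the position of its
`⌈n_g/2⌉`-th leftmost agent, and for each `ℓ ∈ {1,…,k}` the `ℓ`-th facility is opened
at the `(⌈m/2⌉ + ℓ − ⌈k/2⌉)`-th leftmost representative location. -/
def MmaxMech (k : ℕ) : TwoPhase k where
  rep := fun _ S => kthLeftmost S ((Multiset.card S + 1) / 2)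
  sel := fun m R ℓ => kthLeftmost R ((m + 1) / 2 + (ℓ.val + 1) - (k + 1) / 2)

/-- At least `t` elements of a multiset lie weakly left of its `t`-th leftmost element. -/
lemma le_card_filter_le_kthLeftmost (A : Multiset ℝ) {t : ℕ} (ht : 1 ≤ t)
    (htA : t ≤ Multiset.card A) :
    t ≤ Multiset.card (A.filter (· ≤ kthLeftmost A t)) := by
  have hlen : (A.sort (· ≤ ·)).length = Multiset.card A := Multiset.length_sort _
  have hkth : kthLeftmost A t = (A.sort (· ≤ ·))[t - 1]'(by omega) :=
    List.getD_eq_getElem _ _ (by omega)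
  have hsorted : (A.sort (· ≤ ·)).SortedLE := (Multiset.pairwise_sort A (· ≤ ·)).sortedLE
  have hle : ((A.sort (· ≤ ·)).take t : Multiset ℝ) ≤ A.filter (· ≤ kthLeftmost A t) := by
    rw [Multiset.le_filter]
    constructor
    · conv_rhs => rw [← Multiset.sort_eq A (· ≤ ·)]
      exact (List.take_sublist _ _).subperm
    · intro z hz
      obtain ⟨i, hi, rfl⟩ := List.mem_iff_getElem.1 (Multiset.mem_coe.1 hz)
      rw [List.length_take] at hi
      rw [List.getElem_take, hkth]
      exact hsorted.getElem_le_getElem_of_le (by omega)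
  have hcard := Multiset.card_le_card hle
  rw [Multiset.coe_card, List.length_take, hlen] at hcard
  omega

/-- At least `card A + 1 - t` elements of a multiset lie weakly right of its `t`-th leftmost
element. -/
lemma le_card_filter_kthLeftmost_le (A : Multiset ℝ) {t : ℕ} (ht : 1 ≤ t)
    (htA : t ≤ Multiset.card A) :
    Multiset.card A + 1 - t ≤ Multiset.card (A.filter (kthLeftmost A t ≤ ·)) := by
  have hlen : (A.sort (· ≤ ·)).length = Multiset.card A := Multiset.length_sort _
  have hkth : kthLeftmost A t = (A.sort (· ≤ ·))[t - 1]'(by omega) :=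
    List.getD_eq_getElem _ _ (by omega)
  have hsorted : (A.sort (· ≤ ·)).SortedLE := (Multiset.pairwise_sort A (· ≤ ·)).sortedLE
  have hle : ((A.sort (· ≤ ·)).drop (t - 1) : Multiset ℝ) ≤
      A.filter (kthLeftmost A t ≤ ·) := by
    rw [Multiset.le_filter]
    constructor
    · conv_rhs => rw [← Multiset.sort_eq A (· ≤ ·)]
      exact (List.drop_sublist _ _).subperm
    · intro z hz
      obtain ⟨i, hi, rfl⟩ := List.mem_iff_getElem.1 (Multiset.mem_coe.1 hz)
      rw [List.length_drop] at hi
      rw [List.getElem_drop, hkth]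
      exact hsorted.getElem_le_getElem_of_le (by omega)
  have hcard := Multiset.card_le_card hle
  rw [Multiset.coe_card, List.length_drop, hlen] at hcard
  omega

lemma kthLeftmost_le_kthLeftmost (A : Multiset ℝ) {s t : ℕ} (hst : s ≤ t) (ht : 1 ≤ t)
    (htA : t ≤ Multiset.card A) : kthLeftmost A s ≤ kthLeftmost A t := by
  have hlen : (A.sort (· ≤ ·)).length = Multiset.card A := Multiset.length_sort _
  have hsorted : (A.sort (· ≤ ·)).SortedLE := (Multiset.pairwise_sort A (· ≤ ·)).sortedLE
  unfold kthLeftmost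
  rw [List.getD_eq_getElem _ _ (by omega), List.getD_eq_getElem _ _ (by omega)]
  exact hsorted.getElem_le_getElem_of_le (by omega)

/-- For weighted points on the line of total weight `W`, if weight at least `s / 2` lies on each
side of the interval `[L, R]`, the weighted total distance to the farther endpoint is at most
`2 * W / s` times the weighted total distance to any point `c`; here `c` is to the left of the
midpoint. -/
lemma mul_sum_farthest_le_of_le_midpoint {ι : Type*} [Fintype ι] (v x : ι → ℝ)
    (hv : ∀ i, 0 ≤ v i) {L R c s : ℝ} (hLR : L ≤ R) (hs : 0 ≤ s) (hsW : s ≤ ∑ i, v i)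
    (hR : s / 2 ≤ ∑ i with R ≤ x i, v i) (hL : s / 2 ≤ ∑ i with x i ≤ L, v i)
    (hc : c ≤ (L + R) / 2) :
    s * ((∑ i, v i) * ((R - L) / 2) + ∑ i, v i * |x i - (L + R) / 2|)
      ≤ 2 * (∑ i, v i) * ∑ i, v i * |x i - c| := by
  set W := ∑ i, v i with hW
  set a := ∑ i with R ≤ x i, v i with ha
  set b := ∑ i with x i ≤ L, v i with hb
  set G := ∑ i, v i * |x i - c| with hG
  set u := max (c - L) 0 with hu
  have hupper : ∑ i, v i * |x i - (L + R) / 2|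
      ≤ G + ((L + R) / 2 - c) * W - 2 * ((L + R) / 2 - c) * a := by
    rw [hG, hW, ha, Finset.sum_filter, Finset.mul_sum, Finset.mul_sum, ← Finset.sum_add_distrib,
      ← Finset.sum_sub_distrib]
    refine Finset.sum_le_sum fun i _ => ?_
    split_ifs with h
    · rw [abs_of_nonneg (by linarith), abs_of_nonneg (by linarith)]
      linarith
    · have htri : |x i - (L + R) / 2| ≤ |x i - c| + ((L + R) / 2 - c) := by
        have h₁ := abs_sub_le (x i) c ((L + R) / 2)
        rw [abs_sub_comm c, abs_of_nonneg (sub_nonneg.2 hc)] at h₁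
        exact h₁
      nlinarith [mul_le_mul_of_nonneg_left htri (hv i)]
  have hlower : (R - c) * a + u * b ≤ G := by
    rw [hG, ha, hb, Finset.sum_filter, Finset.sum_filter, Finset.mul_sum, Finset.mul_sum,
      ← Finset.sum_add_distrib]
    refine Finset.sum_le_sum fun i _ => ?_
    have hle : (if R ≤ x i then R - c else 0) + (if x i ≤ L then u else 0) ≤ |x i - c| := by
      have h₁ := le_abs_self (x i - c)
      have h₂ := neg_le_abs (x i - c)
      have h₃ := abs_nonneg (x i - c)
      rcases max_cases (c - L) 0 with ⟨h, _⟩ | ⟨h, _⟩ <;> rw [← hu] at h <;> split_ifs <;> linarith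
    have := mul_le_mul_of_nonneg_left hle (hv i)
    split_ifs at this ⊢ <;> linarith
  have hu0 : 0 ≤ u := le_max_right _ _
  have hucL : c - L ≤ u := le_max_left _ _
  have hT : 0 ≤ R - c := by linarith
  have hG' : s / 2 * (R - c + u) ≤ G := by
    nlinarith [mul_le_mul_of_nonneg_left hR hT, mul_le_mul_of_nonneg_left hL hu0]
  have hδ : ((L + R) / 2 - c) * s ≤ 2 * ((L + R) / 2 - c) * a := by
    nlinarith [mul_le_mul_of_nonneg_left hR (sub_nonneg.2 hc)]
  have htotal : W * ((R - L) / 2) + ∑ i, v i * |x i - (L + R) / 2|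
      ≤ G + W * (R - c) - ((L + R) / 2 - c) * s := by linarith
  have hexcess : W * (R - c) - ((L + R) / 2 - c) * s ≤ (2 * W - s) / 2 * (R - c + u) := by
    nlinarith [mul_nonneg (sub_nonneg.2 hsW) hu0, mul_nonneg hs (sub_nonneg.2 hucL)]
  have hscaled := mul_le_mul_of_nonneg_left hG' (show 0 ≤ 2 * W - s by linarith)
  have h₁ := mul_le_mul_of_nonneg_left htotal hs
  have h₂ := mul_le_mul_of_nonneg_left hexcess hs
  linarith

/-- For weighted points on the line of total weight `W`, if weight at least `s / 2` lies on each
side of the interval `[L, R]`, the weighted total distance to the farther endpoint is at most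
`2 * W / s` times the weighted total distance to any point `c`. -/
lemma mul_sum_farthest_le {ι : Type*} [Fintype ι] (v x : ι → ℝ)
    (hv : ∀ i, 0 ≤ v i) {L R c s : ℝ} (hLR : L ≤ R) (hs : 0 ≤ s) (hsW : s ≤ ∑ i, v i)
    (hR : s / 2 ≤ ∑ i with R ≤ x i, v i) (hL : s / 2 ≤ ∑ i with x i ≤ L, v i) :
    s * ((∑ i, v i) * ((R - L) / 2) + ∑ i, v i * |x i - (L + R) / 2|)
      ≤ 2 * (∑ i, v i) * ∑ i, v i * |x i - c| := by
  rcases le_total c ((L + R) / 2) with hc | hc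
  · exact mul_sum_farthest_le_of_le_midpoint v x hv hLR hs hsW hR hL hc
  · have h := mul_sum_farthest_le_of_le_midpoint v (fun i => -x i) hv (neg_le_neg hLR) hs hsW
      (by simpa using hL) (by simpa using hR) (c := -c) (by linarith)
    have hmid : ∀ i, |-x i - (-R + -L) / 2| = |x i - (L + R) / 2| := fun i => by
      rw [← abs_neg]; ring_nf
    have hcen : ∀ i, |-x i - -c| = |x i - c| := fun i => by
      rw [← abs_neg]; ring_nf
    simp only [hmid, hcen] at h
    rwa [show -L - -R = R - L by ring] at h

lemma abs_sub_le_abs_sub_midpoint {L R z w : ℝ} (hL : L ≤ w) (hR : w ≤ R) :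
    |z - w| ≤ (R - L) / 2 + |z - (L + R) / 2| := by
  have h₁ := le_abs_self (z - (L + R) / 2)
  have h₂ := neg_le_abs (z - (L + R) / 2)
  exact abs_le.2 ⟨by linarith, by linarith⟩

section Setting

variable {k m : ℕ} (S : FLSetting k m)

lemma groupSize_pos (j : Fin m) : 0 < groupSize S j := by
  obtain ⟨i, hi⟩ := S.surj j
  exact Finset.card_pos.2 ⟨i, by simp [hi]⟩

lemma card_groupMS (x : Fin S.n → ℝ) (j : Fin m) :
    Multiset.card (groupMS S x j) = groupSize S j := by
  rw [groupMS, Multiset.card_map]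
  rfl

lemma card_repsMS (M : TwoPhase k) (x : Fin S.n → ℝ) :
    Multiset.card (repsMS M S x) = m := by
  simp [repsMS]

/-- The social cost as a weighted sum over all agents. -/
lemma SC_eq_sum_agents (cost : ℝ → (Fin k → ℝ) → ℝ) (x : Fin S.n → ℝ) (y : Fin k → ℝ) :
    SC cost S x y = 1 / (m : ℝ) * ∑ i, 1 / (groupSize S (S.grp i) : ℝ) * cost (x i) y := by
  unfold SC
  rw [← Finset.sum_fiberwise Finset.univ S.grp
    (fun i => 1 / (groupSize S (S.grp i) : ℝ) * cost (x i) y)]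
  congr 1
  refine Finset.sum_congr rfl fun j _ => ?_
  rw [Finset.mul_sum]
  refine Finset.sum_congr rfl fun i hi => ?_
  rw [(Finset.mem_filter.1 hi).2]

lemma sum_agent_weights : ∑ i, 1 / (groupSize S (S.grp i) : ℝ) = m := by
  rw [← Finset.sum_fiberwise Finset.univ S.grp]
  have hgroup : ∀ j : Fin m,
      ∑ i with S.grp i = j, 1 / (groupSize S (S.grp i) : ℝ) = 1 := fun j => by
    have hpos : (0 : ℝ) < groupSize S j := by exact_mod_cast groupSize_pos S j
    rw [Finset.sum_congr rfl (g := fun _ => 1 / (groupSize S j : ℝ))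
      fun i hi => by rw [(Finset.mem_filter.1 hi).2], Finset.sum_const, nsmul_eq_mul]
    exact mul_one_div_cancel hpos.ne'
  rw [Finset.sum_congr rfl fun j _ => hgroup j]
  simp

/-- If in each of `d` groups at least half of the agents satisfy `p`, then the agents satisfying
`p` have total weight at least `d / 2`. -/
lemma half_card_le_sum_agent_weights (p : Fin S.n → Prop) [DecidablePred p] (J : Finset (Fin m))
    (hJ : ∀ j ∈ J,
      groupSize S j ≤ 2 * ((Finset.univ.filter fun i => S.grp i = j).filter p).card) :
    (J.card : ℝ) / 2 ≤ ∑ i with p i, 1 / (groupSize S (S.grp i) : ℝ) := by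
  rw [← Finset.sum_fiberwise (Finset.univ.filter p) S.grp]
  calc (J.card : ℝ) / 2 = ∑ _j ∈ J, (1 / 2 : ℝ) := by simp [div_eq_mul_inv]
    _ ≤ ∑ j ∈ J, ∑ i ∈ Finset.univ.filter p with S.grp i = j,
          1 / (groupSize S (S.grp i) : ℝ) := by
        refine Finset.sum_le_sum fun j hj => ?_
        have hpos : (0 : ℝ) < groupSize S j := by exact_mod_cast groupSize_pos S j
        have hhalf : (groupSize S j : ℝ)
            ≤ 2 * ((Finset.univ.filter fun i => S.grp i = j).filter p).card := by
          exact_mod_cast hJ j hj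
        rw [Finset.sum_congr rfl (g := fun _ => 1 / (groupSize S j : ℝ))
          fun i hi => by rw [(Finset.mem_filter.1 hi).2], Finset.sum_const, nsmul_eq_mul,
          Finset.filter_comm, mul_one_div, le_div_iff₀ hpos]
        linarith
    _ ≤ _ := Finset.sum_le_sum_of_subset_of_nonneg (Finset.subset_univ J)
        fun j _ _ => Finset.sum_nonneg fun i _ => by positivity

lemma card_filter_groupMS (x : Fin S.n → ℝ) (j : Fin m) (p : ℝ → Prop) [DecidablePred p] :
    Multiset.card ((groupMS S x j).filter p)
      = ((Finset.univ.filter fun i => S.grp i = j).filter fun i => p (x i)).card := by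
  rw [groupMS, Multiset.filter_map, Multiset.card_map]
  rfl

lemma card_filter_repsMS (M : TwoPhase k) (x : Fin S.n → ℝ) (p : ℝ → Prop) [DecidablePred p] :
    Multiset.card ((repsMS M S x).filter p)
      = (Finset.univ.filter fun j => p (M.rep m (groupMS S x j))).card := by
  rw [repsMS, Multiset.filter_map, Multiset.card_map]
  rfl

/-- The agents weakly left of the `t`-th leftmost representative have weight at least `t / 2`. -/
lemma half_le_sum_agent_weights_left (x : Fin S.n → ℝ) {t : ℕ} (ht : 1 ≤ t) (htm : t ≤ m) :
    (t : ℝ) / 2 ≤ ∑ i with x i ≤ kthLeftmost (repsMS (MmaxMech k) S x) t,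
      1 / (groupSize S (S.grp i) : ℝ) := by
  set r := kthLeftmost (repsMS (MmaxMech k) S x) t
  have hcount := le_card_filter_le_kthLeftmost (repsMS (MmaxMech k) S x) ht
    (by rw [card_repsMS]; exact htm)
  rw [card_filter_repsMS S (MmaxMech k) x (· ≤ kthLeftmost (repsMS (MmaxMech k) S x) t)] at hcount
  refine le_trans ?_ (half_card_le_sum_agent_weights S (fun i => x i ≤ r)
    (Finset.univ.filter fun j => (MmaxMech k).rep m (groupMS S x j) ≤ r) fun j hj => ?_)
  · gcongr
  · have hpos := groupSize_pos S j
    have hmed := le_card_filter_le_kthLeftmost (groupMS S x j)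
      (t := (Multiset.card (groupMS S x j) + 1) / 2)
      (by rw [card_groupMS]; omega) (by rw [card_groupMS]; omega)
    rw [card_filter_groupMS S x j
      (· ≤ kthLeftmost (groupMS S x j) ((Multiset.card (groupMS S x j) + 1) / 2))] at hmed
    have hsub := Finset.card_le_card (Finset.monotone_filter_right
      (Finset.univ.filter fun i => S.grp i = j) (p := fun i => x i ≤
        kthLeftmost (groupMS S x j) ((Multiset.card (groupMS S x j) + 1) / 2))
      (q := fun i => x i ≤ r) fun i _ hi => hi.trans (Finset.mem_filter.1 hj).2)
    rw [card_groupMS] at hmed hsub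
    omega

/-- The agents weakly right of the `t`-th leftmost representative have weight at least
`(m + 1 - t) / 2`. -/
lemma half_le_sum_agent_weights_right (x : Fin S.n → ℝ) {t : ℕ} (ht : 1 ≤ t) (htm : t ≤ m) :
    ((m + 1 - t : ℕ) : ℝ) / 2 ≤ ∑ i with kthLeftmost (repsMS (MmaxMech k) S x) t ≤ x i,
      1 / (groupSize S (S.grp i) : ℝ) := by
  set r := kthLeftmost (repsMS (MmaxMech k) S x) t
  have hcount := le_card_filter_kthLeftmost_le (repsMS (MmaxMech k) S x) ht
    (by rw [card_repsMS]; exact htm)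
  rw [card_filter_repsMS S (MmaxMech k) x (kthLeftmost (repsMS (MmaxMech k) S x) t ≤ ·),
    card_repsMS] at hcount
  refine le_trans ?_ (half_card_le_sum_agent_weights S (fun i => r ≤ x i)
    (Finset.univ.filter fun j => r ≤ (MmaxMech k).rep m (groupMS S x j)) fun j hj => ?_)
  · gcongr
  · have hpos := groupSize_pos S j
    have hmed := le_card_filter_kthLeftmost_le (groupMS S x j)
      (t := (Multiset.card (groupMS S x j) + 1) / 2)
      (by rw [card_groupMS]; omega) (by rw [card_groupMS]; omega)
    rw [card_filter_groupMS S x j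
      (kthLeftmost (groupMS S x j) ((Multiset.card (groupMS S x j) + 1) / 2) ≤ ·)] at hmed
    have hsub := Finset.card_le_card (Finset.monotone_filter_right
      (Finset.univ.filter fun i => S.grp i = j) (p := fun i =>
        kthLeftmost (groupMS S x j) ((Multiset.card (groupMS S x j) + 1) / 2) ≤ x i)
      (q := fun i => r ≤ x i) fun i _ hi => (Finset.mem_filter.1 hj).2.trans hi)
    rw [card_groupMS] at hmed hsub
    omega

end Setting

/-- A count `d ≥ 1` with `m ≤ k + 2 * d - 1` is at least the fraction `m / (k + 1)`. -/
lemma le_mul_of_le_add_two_mul {k m d : ℕ} (hk : 1 ≤ k) (hd : 1 ≤ d)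
    (hm : m + 1 ≤ k + 2 * d) : m ≤ (k + 1) * d := by
  obtain ⟨k, rfl⟩ := Nat.exists_eq_add_of_le hk
  obtain ⟨d, rfl⟩ := Nat.exists_eq_add_of_le hd
  nlinarith [Nat.zero_le (k * d)]

/-- In the max-variant, for every `k ≥ 3`, the mechanism `M_k^max` has approximation
ratio at most `2(k+1)` on every instance with `m ≥ k` groups. -/
theorem stmt17 (k : ℕ) (hk : 3 ≤ k) (m : ℕ)
    (S : FLSetting k m) (x : Fin S.n → ℝ) (y : Fin k → ℝ) (hy : Feasible S x y) :
    SC (maxCost k) S x (outcome (MmaxMech k) S x)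
      ≤ (2 * ((k : ℝ) + 1)) * SC (maxCost k) S x y := by
  have hmk := S.hmk
  have hm0 : (0 : ℝ) < m := by exact_mod_cast (by omega : 0 < m)
  have hne : Nonempty (Fin k) := ⟨⟨0, by omega⟩⟩
  set A := repsMS (MmaxMech k) S x
  have hcardA : Multiset.card A = m := card_repsMS S _ x
  set l := (m + 1) / 2 + 1 - (k + 1) / 2 with hl
  set r := (m + 1) / 2 + k - (k + 1) / 2 with hr
  have hLR : kthLeftmost A l ≤ kthLeftmost A r :=
    kthLeftmost_le_kthLeftmost A (by omega) (by omega) (by omega)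
  have hleft := half_le_sum_agent_weights_left S x (t := l) (by omega) (by omega)
  have hright := half_le_sum_agent_weights_right S x (t := r) (by omega) (by omega)
  have hfraction : ∀ d : ℕ, 1 ≤ d → m + 1 ≤ k + 2 * d → (m : ℝ) / (k + 1) ≤ d := by
    intro d hd hmd
    rw [div_le_iff₀ (by positivity), mul_comm]
    exact_mod_cast le_mul_of_le_add_two_mul (by omega) hd hmd
  have hl' := hfraction l (by omega) (by omega)
  have hr' := hfraction (m + 1 - r) (by omega) (by omega)
  have key := mul_sum_farthest_le (fun i => 1 / (groupSize S (S.grp i) : ℝ)) x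
    (fun i => by positivity) (c := y ⟨0, by omega⟩) (s := (m : ℝ) / (k + 1)) hLR (by positivity)
    (by rw [sum_agent_weights]; exact div_le_self hm0.le (by linarith [k.cast_nonneg (α := ℝ)]))
    (le_trans (by linarith) hright) (le_trans (by linarith) hleft)
  rw [sum_agent_weights] at key
  set L := kthLeftmost A l
  set R := kthLeftmost A r
  have houtcome : ∀ z, maxCost k z (outcome (MmaxMech k) S x)
      ≤ (R - L) / 2 + |z - (L + R) / 2| := fun z => by
    refine ciSup_le fun ℓ => abs_sub_le_abs_sub_midpoint ?_ ?_
    · exact kthLeftmost_le_kthLeftmost A (by omega) (by omega) (by omega)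
    · exact kthLeftmost_le_kthLeftmost A (by omega) (by omega) (by omega)
  have hopt : ∀ z, |z - y ⟨0, by omega⟩| ≤ maxCost k z y := fun z =>
    le_ciSup (f := fun ℓ => |z - y ℓ|) (Set.finite_range _).bddAbove _
  have hupper : ∑ i, 1 / (groupSize S (S.grp i) : ℝ) * maxCost k (x i) (outcome (MmaxMech k) S x)
      ≤ m * ((R - L) / 2) +
        ∑ i, 1 / (groupSize S (S.grp i) : ℝ) * |x i - (L + R) / 2| := by
    rw [← sum_agent_weights S, Finset.sum_mul, ← Finset.sum_add_distrib]
    refine Finset.sum_le_sum fun i _ => ?_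
    rw [← mul_add]
    exact mul_le_mul_of_nonneg_left (houtcome _) (by positivity)
  have hlower : ∑ i, 1 / (groupSize S (S.grp i) : ℝ) * |x i - y ⟨0, by omega⟩|
      ≤ ∑ i, 1 / (groupSize S (S.grp i) : ℝ) * maxCost k (x i) y :=
    Finset.sum_le_sum fun i _ => mul_le_mul_of_nonneg_left (hopt _) (by positivity)
  rw [SC_eq_sum_agents, SC_eq_sum_agents, mul_left_comm]
  refine mul_le_mul_of_nonneg_left ?_ (by positivity)
  refine hupper.trans (le_trans ?_ (mul_le_mul_of_nonneg_left hlower (by positivity)))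
  rw [div_mul_eq_mul_div, div_le_iff₀ (by positivity)] at key
  refine le_of_mul_le_mul_left (key.trans_eq ?_) hm0
  ring

end
end

section
/- In the max-variant, for every k ≥ 2 facilities, every two-phase mechanism (not necessarily strategyproof) has approximation ratio at least 2k: there exists an instance (with m = k groups of two agents each) on which the social cost of the mechanism's output is at least 2k times the minimum social cost over all feasible solutions. -/
open Finset

noncomputable section

/-- The setting with `k` groups of two agents each. -/
def pairSetting (k : ℕ) (hk : 2 ≤ k) : FLSetting k k where
  n := k * 2
  hn := by omega
  hmk := le_rfl
  grp := fun i => (finProdFinEquiv.symm i).1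
  surj := fun j => ⟨finProdFinEquiv (j, 0), by simp⟩

/-- The `e`-th agent of group `j` in `pairSetting k hk`. -/
def pairAgent (k : ℕ) (hk : 2 ≤ k) (j : Fin k) (e : Fin 2) : Fin (pairSetting k hk).n :=
  finProdFinEquiv (j, e)

theorem pairAgent_inj {k : ℕ} {hk : 2 ≤ k} {j j' : Fin k} {e e' : Fin 2} :
    pairAgent k hk j e = pairAgent k hk j' e' ↔ j = j' ∧ e = e' :=
  (finProdFinEquiv.injective.eq_iff (a := (j, e)) (b := (j', e'))).trans Prod.mk_inj

theorem exists_pairAgent_eq {k : ℕ} {hk : 2 ≤ k} (i : Fin (pairSetting k hk).n) :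
    ∃ j e, pairAgent k hk j e = i :=
  Prod.exists.1 (finProdFinEquiv.surjective i)

theorem grp_pairAgent (k : ℕ) (hk : 2 ≤ k) (j : Fin k) (e : Fin 2) :
    (pairSetting k hk).grp (pairAgent k hk j e) = j :=
  congrArg Prod.fst (finProdFinEquiv.symm_apply_apply (j, e))

theorem filter_grp_pairSetting (k : ℕ) (hk : 2 ≤ k) (j : Fin k) :
    Finset.univ.filter (fun i => (pairSetting k hk).grp i = j) =
      {pairAgent k hk j 0, pairAgent k hk j 1} := by
  ext i
  obtain ⟨j', e, rfl⟩ := exists_pairAgent_eq i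
  fin_cases e <;> simp [pairAgent_inj, grp_pairAgent]

theorem groupSize_pairSetting (k : ℕ) (hk : 2 ≤ k) (j : Fin k) :
    groupSize (pairSetting k hk) j = 2 := by
  rw [groupSize, filter_grp_pairSetting, Finset.card_pair]
  simp [pairAgent_inj]

theorem groupMS_pairSetting (k : ℕ) (hk : 2 ≤ k) (x : Fin (pairSetting k hk).n → ℝ)
    (j : Fin k) :
    groupMS (pairSetting k hk) x j = {x (pairAgent k hk j 0), x (pairAgent k hk j 1)} := by
  rw [groupMS, filter_grp_pairSetting, Finset.insert_val_of_notMem (by simp [pairAgent_inj])]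
  simp

theorem SC_pairSetting (k : ℕ) (hk : 2 ≤ k) (cost : ℝ → (Fin k → ℝ) → ℝ)
    (x : Fin (pairSetting k hk).n → ℝ) (y : Fin k → ℝ) :
    SC cost (pairSetting k hk) x y = (1 / (2 * (k : ℝ))) * ∑ i, cost (x i) y := by
  unfold SC
  simp only [groupSize_pairSetting]
  rw [← Finset.mul_sum, Finset.sum_fiberwise]
  push_cast
  ring

theorem maxCost_nonneg (k : ℕ) (p : ℝ) (y : Fin k → ℝ) : 0 ≤ maxCost k p y :=
  Real.iSup_nonneg fun _ => abs_nonneg _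

theorem abs_sub_le_maxCost (k : ℕ) (p : ℝ) (y : Fin k → ℝ) (l : Fin k) :
    |p - y l| ≤ maxCost k p y :=
  le_ciSup (f := fun l => |p - y l|) (Set.finite_range _).bddAbove l

/-- With as many groups as facilities, every representative is selected. -/
theorem exists_outcome_eq {k : ℕ} {M : TwoPhase k} (hM : M.Valid) (S : FLSetting k k)
    (x : Fin S.n → ℝ) (j : Fin k) :
    ∃ l, outcome M S x l = M.rep k (groupMS S x j) := by
  have hcard : Multiset.card (repsMS M S x) = k := by simp [repsMS]
  have heq : (↑(List.ofFn (outcome M S x)) : Multiset ℝ) = repsMS M S x :=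
    Multiset.eq_of_le_of_card_le (hM.2 k _ hcard le_rfl) (by simp [hcard])
  have hmem : M.rep k (groupMS S x j) ∈ repsMS M S x :=
    Multiset.mem_map_of_mem _ (Finset.mem_univ j)
  rw [← heq, Multiset.mem_coe, List.mem_ofFn] at hmem
  exact hmem

/-- Some pair of points at unit distance has its second point as representative. -/
theorem exists_rep_pair {k : ℕ} {M : TwoPhase k} (hM : M.Valid) (m : ℕ) :
    ∃ a b : ℝ, |b - a| = 1 ∧ M.rep m {a, b} = b := by
  have h := hM.1 m {0, 1} (by simp)
  simp only [Multiset.insert_eq_cons, Multiset.mem_cons, Multiset.mem_singleton] at h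
  rcases h with h | h
  · exact ⟨1, 0, by simp, by rw [Multiset.pair_comm]; exact h⟩
  · exact ⟨0, 1, by simp, h⟩

/-- A version of the lower bound on an instance with positive optimal social cost: one agent
sits at unit distance from all the others and is the representative of its group. -/
theorem exists_instance_pos_opt (k : ℕ) (hk : 2 ≤ k) (M : TwoPhase k) (hM : M.Valid) :
    ∃ (S : FLSetting k k) (x : Fin S.n → ℝ),
      (∀ j : Fin k, groupSize S j = 2) ∧
      ∃ yopt : Fin k → ℝ, Feasible S x yopt ∧
        (∀ y : Fin k → ℝ, Feasible S x y → SC (maxCost k) S x yopt ≤ SC (maxCost k) S x y) ∧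
        0 < SC (maxCost k) S x yopt ∧
        (2 * (k : ℝ)) * SC (maxCost k) S x yopt ≤ SC (maxCost k) S x (outcome M S x) := by
  obtain ⟨a, b, hab, hrep⟩ := exists_rep_pair hM k
  have hk0 : (0 : ℝ) < k := by exact_mod_cast (by omega : 0 < k)
  have : Nonempty (Fin k) := ⟨⟨0, by omega⟩⟩
  let j₀ : Fin k := ⟨0, by omega⟩
  let j₁ : Fin k := ⟨1, by omega⟩
  have hj : j₁ ≠ j₀ := by simp [j₀, j₁]
  let i₀ := pairAgent k hk j₀ 1
  let x : Fin (pairSetting k hk).n → ℝ := fun i => if i = i₀ then b else a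
  have hx₀ : x i₀ = b := by simp [x]
  have hx : ∀ {i}, i ≠ i₀ → x i = a := fun h => by simp [x, h]
  have hfirst : ∀ j, x (pairAgent k hk j 0) = a := fun j => hx (by simp [i₀, pairAgent_inj])
  have hopt : SC (maxCost k) (pairSetting k hk) x (fun _ => a) = 1 / (2 * (k : ℝ)) := by
    have hsum : ∑ i, maxCost k (x i) (fun _ => a) = 1 := by
      rw [Finset.sum_eq_single i₀]
      · simp [maxCost, hx₀, hab]
      · intro i _ hi
        simp [maxCost, hx hi]
      · simp
    rw [SC_pairSetting, hsum, mul_one]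
  refine ⟨pairSetting k hk, x, groupSize_pairSetting k hk, fun _ => a, ?_, ?_, ?_, ?_⟩
  · exact ⟨fun l => pairAgent k hk l 0, fun l l' h => (pairAgent_inj.1 h).1,
      fun l => (hfirst l).symm⟩
  · rintro y ⟨f, hf, hy⟩
    obtain ⟨l, hl⟩ : ∃ l, f l ≠ i₀ := by
      by_contra! h
      exact hj (hf ((h j₁).trans (h j₀).symm))
    have h₀ : 1 ≤ maxCost k (x i₀) y := by
      have h := abs_sub_le_maxCost k b y l
      rw [hy, hx hl, hab] at h
      rwa [hx₀]
    rw [hopt, SC_pairSetting]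
    refine le_mul_of_one_le_right (by positivity) (h₀.trans ?_)
    exact Finset.single_le_sum (f := fun i => maxCost k (x i) y)
      (fun i _ => maxCost_nonneg k _ _) (Finset.mem_univ i₀)
  · rw [hopt]
    positivity
  · obtain ⟨l₀, hl₀⟩ := exists_outcome_eq hM (pairSetting k hk) x j₀
    obtain ⟨l₁, hl₁⟩ := exists_outcome_eq hM (pairSetting k hk) x j₁
    rw [groupMS_pairSetting, hfirst, hx₀, hrep] at hl₀
    have hmem := hM.1 k {a, a} (by simp)
    simp only [Multiset.insert_eq_cons, Multiset.mem_cons, Multiset.mem_singleton,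
      or_self] at hmem
    rw [groupMS_pairSetting, hfirst, hx (by simp [i₀, pairAgent_inj, hj]),
      Multiset.insert_eq_cons, hmem] at hl₁
    have hcost : ∀ i, 1 ≤ maxCost k (x i) (outcome M (pairSetting k hk) x) := by
      intro i
      by_cases hi : i = i₀
      · have h := abs_sub_le_maxCost k b (outcome M (pairSetting k hk) x) l₁
        rw [hl₁, hab] at h
        rwa [hi, hx₀]
      · have h := abs_sub_le_maxCost k a (outcome M (pairSetting k hk) x) l₀
        rw [hl₀, abs_sub_comm, hab] at h
        rwa [hx hi]
    have hsum := Finset.card_nsmul_le_sum Finset.univ _ 1 fun i _ => hcost i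
    have hn : (pairSetting k hk).n = k * 2 := rfl
    simp only [Finset.card_univ, Fintype.card_fin, nsmul_eq_mul, mul_one, hn,
      Nat.cast_mul, Nat.cast_ofNat] at hsum
    rw [hopt, SC_pairSetting, mul_comm]
    gcongr
    linarith

/-- In the max-variant, for every `k ≥ 2`, every (valid) two-phase mechanism has
approximation ratio at least `2k`: there is an instance with `m = k` groups of two agents
each on which the output's social cost is at least `2k` times the minimum social cost
over all feasible solutions. -/
theorem stmt18 (k : ℕ) (hk : 2 ≤ k) (M : TwoPhase k) (hM : M.Valid) :
    ∃ (S : FLSetting k k) (x : Fin S.n → ℝ),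
      (∀ j : Fin k, groupSize S j = 2) ∧
      ∃ yopt : Fin k → ℝ, Feasible S x yopt ∧
        (∀ y : Fin k → ℝ, Feasible S x y → SC (maxCost k) S x yopt ≤ SC (maxCost k) S x y) ∧
        (2 * (k : ℝ)) * SC (maxCost k) S x yopt ≤ SC (maxCost k) S x (outcome M S x) := by
  obtain ⟨S, x, hsize, yopt, hfeas, hmin, -, hratio⟩ := exists_instance_pos_opt k hk M hM
  exact ⟨S, x, hsize, yopt, hfeas, hmin, hratio⟩

end
end
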